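/- For every real number s > 0, the series ∑_{n=1}^{∞} e^{−s n} · (∑_{k=1}^{n−1} 1/k) converges and its sum equals (s − ln(e^{s} − 1))/(e^{s} − 1). (This is the discrete Laplace transform of the discrete convolution of the sequences 1/n and 1, and underlies the inversion step in solving the initial value problem n·Δf(n) = 1, f(2) = 2.) -/

import Mathlib

/-!
The Cauchy product of `∑ zⁿ / n = -log (1 - z)` with the geometric series replaces the coefficients
`1 / n` by their partial sums, so `∑ Hₙ zⁿ = -log (1 - z) / (1 - z)` on the open unit disc.
The transform is this series at `z = e⁻ˢ`, multiplied by one further factor `e⁻ˢ`.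
-/

open Finset

theorem hasSum_sum_range_succ_mul_pow {𝕜 : Type*} [NormedDivisionRing 𝕜] {a : ℕ → 𝕜} {x A : 𝕜}
    (hx : ‖x‖ < 1) (ha : HasSum (fun n ↦ a n * x ^ n) A)
    (ha_norm : Summable fun n ↦ ‖a n * x ^ n‖) :
    HasSum (fun n ↦ (∑ k ∈ range (n + 1), a k) * x ^ n) (A * (1 - x)⁻¹) := by
  have hgeom : HasSum (fun n ↦ x ^ n) (1 - x)⁻¹ := hasSum_geometric_of_norm_lt_one hx
  have hprod := hasSum_sum_range_mul_of_summable_norm' ha_norm ha.summable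
    (summable_norm_geometric_of_norm_lt_one hx) hgeom.summable
  rw [ha.tsum_eq, hgeom.tsum_eq] at hprod
  refine hprod.congr_fun fun n ↦ ?_
  rw [sum_mul]
  refine sum_congr rfl fun k hk ↦ ?_
  rw [mul_assoc, ← pow_add, Nat.add_sub_cancel' (mem_range_succ_iff.mp hk)]

theorem hasSum_harmonic_mul_pow_complex {z : ℂ} (hz : ‖z‖ < 1) :
    HasSum (fun n ↦ (harmonic n : ℂ) * z ^ n) (-Complex.log (1 - z) / (1 - z)) := by
  have hlog : HasSum (fun n : ℕ ↦ (n : ℂ)⁻¹ * z ^ n) (-Complex.log (1 - z)) := by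
    simpa only [div_eq_inv_mul] using Complex.hasSum_taylorSeries_neg_log hz
  rw [div_eq_mul_inv]
  refine (hasSum_sum_range_succ_mul_pow hz hlog hlog.summable.norm).congr_fun fun n ↦ ?_
  -- The `k = 0` term is `0⁻¹ = 0`.
  simp [harmonic, sum_range_succ']

theorem hasSum_harmonic_mul_pow_real {x : ℝ} (hx : |x| < 1) :
    HasSum (fun n ↦ (harmonic n : ℝ) * x ^ n) (-Real.log (1 - x) / (1 - x)) := by
  have hpos : 0 ≤ 1 - x := sub_nonneg.mpr (abs_lt.mp hx).2.le
  have hz : ‖(x : ℂ)‖ < 1 := by rwa [Complex.norm_real]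
  rw [← Complex.hasSum_ofReal]
  simpa [Complex.ofReal_log hpos] using hasSum_harmonic_mul_pow_complex hz

theorem one_sub_exp_neg (s : ℝ) : 1 - Real.exp (-s) = (Real.exp s - 1) / Real.exp s := by
  rw [sub_div, div_self (Real.exp_ne_zero s), one_div, Real.exp_neg]

theorem log_one_sub_exp_neg {s : ℝ} (hs : s ≠ 0) :
    Real.log (1 - Real.exp (-s)) = Real.log (Real.exp s - 1) - s := by
  have hexp : Real.exp s - 1 ≠ 0 := sub_ne_zero.mpr ((Real.exp_eq_one_iff s).not.mpr hs)
  rw [one_sub_exp_neg, Real.log_div hexp (Real.exp_ne_zero s), Real.log_exp]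

/-- For `s > 0`, `∑_{n=1}^∞ e^{−sn} (∑_{k=1}^{n−1} 1/k) = (s − ln(e^s − 1))/(e^s − 1)`. -/
theorem stmt_6 (s : ℝ) (hs : 0 < s) :
    HasSum (fun n : ℕ => Real.exp (-s * (n + 1)) * ∑ k ∈ Finset.Icc 1 n, (1 : ℝ) / k)
      ((s - Real.log (Real.exp s - 1)) / (Real.exp s - 1)) := by
  have hx : |Real.exp (-s)| < 1 := by
    rwa [Real.abs_exp, Real.exp_lt_one_iff, neg_lt_zero]
  have hval : Real.exp (-s) * (-Real.log (1 - Real.exp (-s)) / (1 - Real.exp (-s))) =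
      (s - Real.log (Real.exp s - 1)) / (Real.exp s - 1) := by
    rw [log_one_sub_exp_neg hs.ne', neg_sub, one_sub_exp_neg, Real.exp_neg]
    field_simp
  rw [← hval]
  refine ((hasSum_harmonic_mul_pow_real hx).mul_left (Real.exp (-s))).congr_fun fun n ↦ ?_
  have hexp : Real.exp (-s * (n + 1)) = Real.exp (-s) * Real.exp (-s) ^ n := by
    rw [← Real.exp_nat_mul, ← Real.exp_add]
    ring_nf
  have hharmonic : ∑ k ∈ Icc 1 n, (1 : ℝ) / k = harmonic n := by
    simp [harmonic_eq_sum_Icc]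
  rw [hexp, hharmonic, mul_assoc, mul_comm (Real.exp (-s) ^ n)]
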